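/- Let (c_k)_{k∈ℤ} be complex numbers with Σ_{k∈ℤ} |k| |c_k| < ∞ and let σ : ℝ → ℂ satisfy σ(z) = Σ_{k∈ℤ} c_k e^{ikz} for all z ∈ ℝ. Define σ̃(y,t) = (4πt)^{-1/2} ∫_ℝ e^{-(y-z)²/(4t)} σ(z) dz. Then for every t > 0 the function y ↦ σ̃(y,t) is differentiable, and |∂_y σ̃(y,t)| ≤ (Σ_{k∈ℤ} |k| |c_k|) e^{-t} for all y ∈ ℝ and t > 0. -/

import Mathlib

/-!
The heat flow acts diagonally on Fourier modes: by the Gaussian integral formula it maps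
`e^{ikz}` to `e^{-k²t} e^{iky}` (`heatExt_mode`). Since `∑ |c_k| < ∞`, sum and integral may be
interchanged, so `σ̃(y,t) = ∑ c_k e^{-k²t} e^{iky}` (`heatExt_eq_tsum`). Differentiating term by
term, the `k`-th term contributes at most `|k| |c_k| e^{-k²t}`; the mode `k = 0` drops out, and
`k² ≥ 1` for every other mode, which gives the factor `e^{-t}`.
-/

open MeasureTheory Real

/-- The solution of the heat equation on `ℝ` with initial data `σ`,
given by convolution with the Gaussian heat kernel `(4πt)^{-1/2} e^{-(y-z)²/(4t)}`. -/
noncomputable def heatExt (σ : ℝ → ℂ) (y t : ℝ) : ℂ :=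
  ((4 * π * t) ^ (-(1 : ℝ) / 2) : ℝ) •
    ∫ z : ℝ, (Real.exp (-(y - z) ^ 2 / (4 * t)) : ℂ) * σ z

/-- The weight `|k|` kills the coefficient `c 0`, but one term does not affect summability. -/
lemma summable_norm_coeff {c : ℤ → ℂ} (hc : Summable fun k : ℤ => |(k : ℝ)| * ‖c k‖) :
    Summable fun k : ℤ => ‖c k‖ := by
  refine summable_of_hasFiniteSupport (f := fun k : ℤ => if k = 0 then ‖c 0‖ else 0)
    ((Set.finite_singleton (0 : ℤ)).subset ?_) |>.add hc |>.of_nonneg_of_le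
      (fun _ => norm_nonneg _) ?_
  · intro k hk
    by_contra h
    simp_all
  · intro k
    by_cases hk : k = 0
    · simp [hk]
    · have h1 : (1 : ℝ) ≤ |(k : ℝ)| := by exact_mod_cast Int.one_le_abs hk
      simpa [hk] using le_mul_of_one_le_left (norm_nonneg (c k)) h1

lemma norm_cexp_mode (k : ℤ) (z : ℝ) :
    ‖Complex.exp (Complex.I * (k : ℂ) * (z : ℂ))‖ = 1 := by
  rw [Complex.norm_exp]
  simp

lemma integrable_gaussian (y : ℝ) {t : ℝ} (ht : 0 < t) :
    Integrable fun z : ℝ => Real.exp (-(y - z) ^ 2 / (4 * t)) := by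
  have h := (integrable_exp_neg_mul_sq (b := 1 / (4 * t)) (by positivity)).comp_sub_left y
  refine h.congr (Filter.Eventually.of_forall fun z => ?_)
  simp only
  congr 1
  ring

lemma heatExt_mode (k : ℤ) (y : ℝ) {t : ℝ} (ht : 0 < t) :
    heatExt (fun z => Complex.exp (Complex.I * (k : ℂ) * (z : ℂ))) y t =
      Complex.exp (-(k : ℂ) ^ 2 * t) * Complex.exp (Complex.I * (k : ℂ) * (y : ℂ)) := by
  have htc : (t : ℂ) ≠ 0 := by exact_mod_cast ht.ne'
  have hb : (((-1 / (4 * t) : ℝ)) : ℂ).re < 0 := by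
    rw [Complex.ofReal_re]
    exact div_neg_of_neg_of_pos (by norm_num) (by positivity)
  -- Expand the square: the integrand is the exponential of a quadratic polynomial in `z`.
  have hint (z : ℝ) : (Real.exp (-(y - z) ^ 2 / (4 * t)) : ℂ) *
      Complex.exp (Complex.I * (k : ℂ) * (z : ℂ)) =
      Complex.exp (((-1 / (4 * t) : ℝ) : ℂ) * z ^ 2 + (y / (2 * t) + Complex.I * k) * z
        + (-y ^ 2 / (4 * t))) := by
    rw [Complex.ofReal_exp, ← Complex.exp_add]
    congr 1
    push_cast
    field_simp
    ring
  have hpos : 0 < 4 * π * t := by positivity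
  have hconst : ((4 * π * t : ℝ) ^ (-(1 : ℝ) / 2) : ℝ) *
      ((π : ℂ) / -((-1 / (4 * t) : ℝ) : ℂ)) ^ (1 / 2 : ℂ) = 1 := by
    have h1 : (π : ℂ) / -((-1 / (4 * t) : ℝ) : ℂ) = ((4 * π * t : ℝ) : ℂ) := by
      push_cast
      field_simp
    have h2 : (1 / 2 : ℂ) = ((1 / 2 : ℝ) : ℂ) := by norm_num
    rw [h1, h2, ← Complex.ofReal_cpow hpos.le, ← Complex.ofReal_mul, ← Real.rpow_add hpos]
    norm_num
  rw [heatExt]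
  simp_rw [hint]
  rw [integral_cexp_quadratic hb, Complex.real_smul, ← mul_assoc, hconst, one_mul,
    ← Complex.exp_add]
  congr 1
  push_cast
  field_simp
  ring_nf
  rw [Complex.I_sq]
  ring

lemma heatExt_eq_tsum {c : ℤ → ℂ} (hc : Summable fun k : ℤ => ‖c k‖) {σ : ℝ → ℂ}
    (hσ : ∀ z : ℝ, σ z = ∑' k : ℤ, c k * Complex.exp (Complex.I * (k : ℂ) * (z : ℂ)))
    (y : ℝ) {t : ℝ} (ht : 0 < t) :
    heatExt σ y t = ∑' k : ℤ, c k *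
      (Complex.exp (-(k : ℂ) ^ 2 * t) * Complex.exp (Complex.I * (k : ℂ) * (y : ℂ))) := by
  have hnorm (k : ℤ) (z : ℝ) : ‖(Real.exp (-(y - z) ^ 2 / (4 * t)) : ℂ) *
      (c k * Complex.exp (Complex.I * (k : ℂ) * (z : ℂ)))‖ =
      Real.exp (-(y - z) ^ 2 / (4 * t)) * ‖c k‖ := by
    rw [norm_mul, norm_mul, norm_cexp_mode, mul_one, Complex.norm_real,
      Real.norm_of_nonneg (Real.exp_pos _).le]
  have hsum := hasSum_integral_of_summable_integral_norm (μ := volume)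
    (F := fun (k : ℤ) (z : ℝ) => (Real.exp (-(y - z) ^ 2 / (4 * t)) : ℂ) *
      (c k * Complex.exp (Complex.I * (k : ℂ) * (z : ℂ))))
    (fun k => by
      refine ((integrable_gaussian y ht).mul_const ‖c k‖).mono' (by fun_prop) ?_
      exact Filter.Eventually.of_forall fun z => (hnorm k z).le)
    (by
      simp_rw [hnorm, integral_mul_const]
      exact hc.mul_left _)
  have hσ' (z : ℝ) : (Real.exp (-(y - z) ^ 2 / (4 * t)) : ℂ) * σ z =
      ∑' k : ℤ, (Real.exp (-(y - z) ^ 2 / (4 * t)) : ℂ) *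
        (c k * Complex.exp (Complex.I * (k : ℂ) * (z : ℂ))) := by
    rw [hσ, tsum_mul_left]
  rw [heatExt]
  simp_rw [hσ']
  rw [← (hsum.const_smul _).tsum_eq]
  refine tsum_congr fun k => ?_
  rw [← heatExt_mode k y ht, heatExt]
  simp_rw [mul_left_comm _ (c k), integral_const_mul]
  rw [mul_smul_comm]

/-- If `σ(z) = Σ_{k∈ℤ} c_k e^{ikz}` with `Σ |k| |c_k| < ∞`, then for every `t > 0` the
function `y ↦ σ̃(y,t)` is differentiable and `|∂_y σ̃(y,t)| ≤ (Σ |k| |c_k|) e^{-t}`. -/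
theorem stmt_3 (c : ℤ → ℂ) (hc : Summable fun k : ℤ => |(k : ℝ)| * ‖c k‖)
    (σ : ℝ → ℂ)
    (hσ : ∀ z : ℝ, σ z = ∑' k : ℤ, c k * Complex.exp (Complex.I * (k : ℂ) * (z : ℂ))) :
    ∀ y t : ℝ, 0 < t →
      DifferentiableAt ℝ (fun y' => heatExt σ y' t) y ∧
      ‖deriv (fun y' => heatExt σ y' t) y‖
        ≤ (∑' k : ℤ, |(k : ℝ)| * ‖c k‖) * Real.exp (-t) := by
  intro y t ht
  have hc1 := summable_norm_coeff hc
  have hnexp (k : ℤ) : ‖Complex.exp (-(k : ℂ) ^ 2 * t)‖ = Real.exp (-(k : ℝ) ^ 2 * t) := by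
    rw [Complex.norm_exp]
    congr 1
    norm_cast
  have hu : Summable fun k : ℤ => |(k : ℝ)| * ‖c k‖ * Real.exp (-t) := hc.mul_right _
  let g' : ℤ → ℝ → ℂ := fun k x => c k * (Complex.exp (-(k : ℂ) ^ 2 * t) *
    (Complex.exp (Complex.I * (k : ℂ) * (x : ℂ)) * (Complex.I * (k : ℂ))))
  have hg (k : ℤ) (x : ℝ) : HasDerivAt (fun x : ℝ => c k * (Complex.exp (-(k : ℂ) ^ 2 * t) *
      Complex.exp (Complex.I * (k : ℂ) * (x : ℂ)))) (g' k x) x := by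
    have h := (Complex.ofRealCLM.hasDerivAt (x := x)).const_mul (Complex.I * (k : ℂ))
    simpa [g', -neg_mul] using (h.cexp.const_mul (Complex.exp (-(k : ℂ) ^ 2 * t))).const_mul (c k)
  have hg' (k : ℤ) (x : ℝ) : ‖g' k x‖ ≤ |(k : ℝ)| * ‖c k‖ * Real.exp (-t) := by
    have h1 : ‖g' k x‖ = |(k : ℝ)| * ‖c k‖ * Real.exp (-(k : ℝ) ^ 2 * t) := by
      simp only [g', norm_mul, norm_cexp_mode, hnexp, Complex.norm_I, Complex.norm_intCast]
      ring
    rw [h1]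
    by_cases hk : k = 0
    · simp [hk]
    · have h2 : (1 : ℝ) ≤ (k : ℝ) ^ 2 := by
        rw [one_le_sq_iff_one_le_abs]
        exact_mod_cast Int.one_le_abs hk
      gcongr
      nlinarith
  have hg0 : Summable fun k : ℤ => c k * (Complex.exp (-(k : ℂ) ^ 2 * t) *
      Complex.exp (Complex.I * (k : ℂ) * ((0 : ℝ) : ℂ))) := by
    refine Summable.of_norm_bounded hc1 fun k => ?_
    rw [norm_mul, norm_mul, norm_cexp_mode, hnexp, mul_one]
    refine mul_le_of_le_one_right (norm_nonneg _) (Real.exp_le_one_iff.mpr ?_)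
    nlinarith [mul_nonneg (sq_nonneg (k : ℝ)) ht.le]
  have hD := hasDerivAt_tsum hu hg hg' hg0 y
  rw [show (fun y' => heatExt σ y' t) = _ from funext fun y' => heatExt_eq_tsum hc1 hσ y' ht]
  refine ⟨hD.differentiableAt, ?_⟩
  rw [hD.deriv, ← tsum_mul_right]
  exact tsum_of_norm_bounded hu.hasSum fun k => hg' k y
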